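/- Let L > 0, M ≥ 1, let a : ℝ → ℝ be an L-periodic continuous function with magnetic flux α = (1/(2π))∫₀^L a(x)dx, α ∉ ℤ, and define K₂(α) = (5/(3√3 π)) · [sup_{b ≥ 0} b^{5/3} Σ_{k∈ℤ} (|k+α|³ + b)^{−2}]². Let ψ₁,…,ψ_N : ℝ → ℂ^M be L-periodic H¹ vector functions orthonormal in L²((0,L), ℂ^M), and let U(x) = Σ_{n=1}^N ψ_n(x) ψ_n(x)^* be the M×M matrix with entries U(x)_{jl} = Σ_n ψ_n(x,j) conj(ψ_n(x,l)). Then ∫₀^L Tr[U(x)³] dx ≤ K₂(α) · Σ_{n=1}^N ∫₀^L |i ψ_n'(x) − a(x)ψ_n(x)|²_{ℂ^M} dx. -/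

import Mathlib

open MeasureTheory Real Filter

/-- The constant `k(α)` from (K1): `1/|sin(2πα)|` when `α mod 1 ∈ (0,1/4)∪(3/4,1)`,
and `1` when `α mod 1 ∈ [1/4,3/4]`. -/
noncomputable def kConst (α : ℝ) : ℝ :=
  if 1/4 ≤ Int.fract α ∧ Int.fract α ≤ 3/4 then 1
  else 1 / |Real.sin (2 * Real.pi * α)|

/-- `F(b,α) = b^{5/3} Σ_{k∈ℤ} (|k+α|³+b)^{-2}`. -/
noncomputable def Fsum (α b : ℝ) : ℝ :=
  b ^ ((5:ℝ)/3) * ∑' k : ℤ, ((|(k : ℝ) + α| ^ 3 + b) ^ 2)⁻¹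

/-- `sup_{b ≥ 0} F(b,α)`. -/
noncomputable def supF (α : ℝ) : ℝ := ⨆ b : {x : ℝ // 0 ≤ x}, Fsum α b.1

/-- The constant `K₂(α)`. -/
noncomputable def K2 (α : ℝ) : ℝ :=
  5 / (3 * Real.sqrt 3 * Real.pi) * (supF α) ^ 2

/-- `K(α) = min(K₁(α), K₂(α))` with `K₁(α) = k(α)²`. -/
noncomputable def Kmin (α : ℝ) : ℝ := min ((kConst α) ^ 2) (K2 α)

/-!
Multiplying every `ψₙ` by `exp (i ∫₀ˣ (a - β))`, where `β` is the mean of `a`, leaves the density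
unchanged and replaces `a` by the constant `2 π α / L`, so that the kinetic energy becomes
`∑ₖ |k + α|² |cₖ|²` in Fourier coefficients. For each `t ≥ 0` split the fields with the multipliers
`p³ / (p³ + t³)` and `t³ / (p³ + t³)`, `p = |k + α|`. By orthonormality and Bessel's inequality the
low part of the analysis operator of `(ψₙ(x))ₙ` has squared norm at most
`∑ₖ (t³ / (p³ + t³))² ≤ t · supF α`. On an eigenvector of `U(x)` with eigenvalue `r²` the high part
is therefore at least `r - √(t · supF α)`, and integrating the square of this against `2 t dt` gives
`r⁶ / (15 (supF α)²)`. Summing over the eigenvectors and integrating over `x` bounds `∫ Tr U³` by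
the `t`-integral of the high parts, in which each frequency contributes
`∫₀^∞ 2 t (p³ / (p³ + t³))² dt = 4π / (9√3) · p²`.
-/

open scoped ComplexConjugate InnerProductSpace Matrix

section CubicIntegral

/-- A primitive of `2 t / (1 + t³)²` on `[0, ∞)`, found by integrating by parts and expanding
`1 / (1 + t³)` in partial fractions. -/
noncomputable def cubicPrimitive (t : ℝ) : ℝ :=
  2 / 3 * (t ^ 2 / (1 + t ^ 3) + (1 / 6 * log ((t ^ 2 - t + 1) / (1 + t) ^ 2) +
    1 / √3 * arctan ((2 * t - 1) / √3)))

lemma sq_sub_self_add_one_pos (t : ℝ) : 0 < t ^ 2 - t + 1 := by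
  nlinarith [sq_nonneg (t - 1 / 2)]

lemma hasDerivAt_log_cubic {t : ℝ} (ht : 0 ≤ t) :
    HasDerivAt (fun t : ℝ => log ((t ^ 2 - t + 1) / (1 + t) ^ 2))
      (3 * (t - 1) / (1 + t ^ 3)) t := by
  have hq := sq_sub_self_add_one_pos t
  have hnum : HasDerivAt (fun t : ℝ => t ^ 2 - t + 1) (2 * t - 1) t := by
    simpa using ((hasDerivAt_pow 2 t).sub (hasDerivAt_id t)).add_const 1
  have hden : HasDerivAt (fun t : ℝ => (1 + t) ^ 2) (2 * (1 + t)) t := by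
    simpa using ((hasDerivAt_id t).const_add 1).fun_pow 2
  have hfactor : 1 + t ^ 3 = (1 + t) * (t ^ 2 - t + 1) := by ring
  refine ((hnum.fun_div hden (by positivity)).log (by positivity)).congr_deriv ?_
  rw [hfactor]
  field_simp
  ring

lemma hasDerivAt_arctan_cubic (t : ℝ) :
    HasDerivAt (fun t : ℝ => 1 / √3 * arctan ((2 * t - 1) / √3))
      (1 / (2 * (t ^ 2 - t + 1))) t := by
  have h3 : √3 ^ 2 = (3 : ℝ) := sq_sqrt (by norm_num)
  have harg : HasDerivAt (fun t : ℝ => (2 * t - 1) / √3) (2 / √3) t := by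
    simpa using (((hasDerivAt_id t).const_mul 2).sub_const 1).div_const (√3)
  have hden : 1 + ((2 * t - 1) / √3) ^ 2 = 4 / 3 * (t ^ 2 - t + 1) := by
    rw [div_pow, h3]
    ring
  refine (harg.arctan.const_mul (1 / √3)).congr_deriv ?_
  rw [hden]
  field_simp
  rw [h3]
  ring

lemma hasDerivAt_cubicPrimitive {t : ℝ} (ht : 0 ≤ t) :
    HasDerivAt cubicPrimitive (2 * t / (1 + t ^ 3) ^ 2) t := by
  have hcube : HasDerivAt (fun t : ℝ => 1 + t ^ 3) (3 * t ^ 2) t := by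
    simpa using (hasDerivAt_pow 3 t).const_add 1
  have hsq : HasDerivAt (fun t : ℝ => t ^ 2) (2 * t) t := by simpa using hasDerivAt_pow 2 t
  have hfactor : 1 + t ^ 3 = (1 + t) * (t ^ 2 - t + 1) := by ring
  refine (((hsq.div hcube (by positivity)).add (((hasDerivAt_log_cubic ht).const_mul (1 / 6)).add
    (hasDerivAt_arctan_cubic t))).const_mul (2 / 3)).congr_deriv ?_
  rw [hfactor]
  field_simp
  ring

lemma cubicPrimitive_zero : cubicPrimitive 0 = -(2 / 3 * (1 / √3 * (π / 6))) := by
  have harg : (2 * 0 - 1) / √3 = -(√3)⁻¹ := by ring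
  rw [cubicPrimitive, harg, arctan_neg, arctan_inv_sqrt_three]
  simp

lemma tendsto_sq_div_one_add_cube_atTop :
    Tendsto (fun t : ℝ => t ^ 2 / (1 + t ^ 3)) atTop (nhds 0) := by
  refine squeeze_zero' ?_ ?_ tendsto_inv_atTop_zero
  · filter_upwards [eventually_gt_atTop 0] with t ht
    positivity
  · filter_upwards [eventually_gt_atTop 0] with t ht
    rw [inv_eq_one_div, div_le_div_iff₀ (by positivity) ht]
    nlinarith

lemma tendsto_log_cubic_atTop :
    Tendsto (fun t : ℝ => log ((t ^ 2 - t + 1) / (1 + t) ^ 2)) atTop (nhds 0) := by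
  have hsmall : Tendsto (fun t : ℝ => t / (1 + t) ^ 2) atTop (nhds 0) := by
    refine squeeze_zero' ?_ ?_ tendsto_inv_atTop_zero
    · filter_upwards [eventually_gt_atTop 0] with t ht
      positivity
    · filter_upwards [eventually_gt_atTop 0] with t ht
      rw [inv_eq_one_div, div_le_div_iff₀ (by positivity) ht]
      nlinarith
  have hratio : Tendsto (fun t : ℝ => (t ^ 2 - t + 1) / (1 + t) ^ 2) atTop (nhds 1) := by
    have hone : Tendsto (fun t : ℝ => 1 - 3 * (t / (1 + t) ^ 2)) atTop (nhds 1) := by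
      simpa using (hsmall.const_mul 3).const_sub 1
    refine hone.congr' ?_
    filter_upwards [eventually_gt_atTop 0] with t ht
    field_simp
    ring
  simpa using hratio.log one_ne_zero

lemma tendsto_cubicPrimitive_atTop :
    Tendsto cubicPrimitive atTop (nhds (2 / 3 * (1 / √3 * (π / 2)))) := by
  have harg : Tendsto (fun t : ℝ => (2 * t - 1) / √3) atTop atTop :=
    (tendsto_atTop_add_const_right _ _ (tendsto_id.const_mul_atTop two_pos)).atTop_div_const
      (by positivity)
  have harctan : Tendsto (fun t : ℝ => arctan ((2 * t - 1) / √3)) atTop (nhds (π / 2)) :=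
    (tendsto_nhds_of_tendsto_nhdsWithin tendsto_arctan_atTop).comp harg
  have hsum := (tendsto_sq_div_one_add_cube_atTop.add ((tendsto_log_cubic_atTop.const_mul
    (1 / 6)).add (harctan.const_mul (1 / √3)))).const_mul (2 / 3)
  simp only [mul_zero, zero_add] at hsum
  exact hsum

lemma integrableOn_two_mul_div_one_add_cube_sq :
    IntegrableOn (fun t : ℝ => 2 * t / (1 + t ^ 3) ^ 2) (Set.Ioi 0) :=
  integrableOn_Ioi_deriv_of_nonneg' (fun _ ht => hasDerivAt_cubicPrimitive ht)
    (fun t (ht : 0 < t) => by positivity) tendsto_cubicPrimitive_atTop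

theorem integral_two_mul_div_one_add_cube_sq :
    ∫ t in Set.Ioi (0 : ℝ), 2 * t / (1 + t ^ 3) ^ 2 = 4 * π / (9 * √3) := by
  rw [integral_Ioi_of_hasDerivAt_of_nonneg' (fun _ ht => hasDerivAt_cubicPrimitive ht)
    (fun t (ht : 0 < t) => by positivity) tendsto_cubicPrimitive_atTop, cubicPrimitive_zero]
  field_simp
  ring

end CubicIntegral

section HighPass

/-- The multiplier `p³ / (p³ + t³)` that keeps the frequencies `p` above the scale `t ≥ 0`.
The absolute value extends it continuously to all real `t`. -/
noncomputable def highPass (p t : ℝ) : ℝ := p ^ 3 / (p ^ 3 + |t| ^ 3)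

variable {p : ℝ}

lemma highPass_nonneg (hp : 0 < p) (t : ℝ) : 0 ≤ highPass p t := by
  unfold highPass
  positivity

lemma highPass_le_one (hp : 0 < p) (t : ℝ) : highPass p t ≤ 1 := by
  unfold highPass
  exact div_le_one_of_le₀ (le_add_of_nonneg_right (by positivity)) (by positivity)

lemma continuous_highPass (hp : 0 < p) : Continuous (highPass p) := by
  unfold highPass
  exact continuous_const.div (by fun_prop) fun t => by positivity

lemma one_sub_highPass (hp : 0 < p) {t : ℝ} (ht : 0 ≤ t) :
    1 - highPass p t = t ^ 3 / (p ^ 3 + t ^ 3) := by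
  rw [highPass, abs_of_nonneg ht]
  field_simp
  ring

lemma two_mul_mul_highPass_sq (hp : 0 < p) {t : ℝ} (ht : 0 < t) :
    2 * t * highPass p t ^ 2 = p * (2 * (p⁻¹ * t) / (1 + (p⁻¹ * t) ^ 3) ^ 2) := by
  rw [highPass, abs_of_pos ht]
  field_simp

lemma integral_two_mul_mul_highPass_sq_le (hp : 0 < p) {T : ℝ} (hT : 0 ≤ T) :
    ∫ t in (0 : ℝ)..T, 2 * t * highPass p t ^ 2 ≤ 4 * π / (9 * √3) * p ^ 2 := by
  have hscale : Set.EqOn (fun t => 2 * t * highPass p t ^ 2)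
      (fun t => p * (2 * (p⁻¹ * t) / (1 + (p⁻¹ * t) ^ 3) ^ 2)) (Set.Ioi 0) :=
    fun t ht => two_mul_mul_highPass_sq hp ht
  have hint : IntegrableOn (fun t => 2 * t * highPass p t ^ 2) (Set.Ioi 0) := by
    refine (IntegrableOn.congr_fun ?_ hscale.symm measurableSet_Ioi)
    refine Integrable.const_mul ?_ p
    refine (integrableOn_Ioi_comp_mul_left_iff (fun t => 2 * t / (1 + t ^ 3) ^ 2) 0
      (inv_pos.2 hp)).2 ?_
    simpa only [mul_zero] using integrableOn_two_mul_div_one_add_cube_sq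
  rw [intervalIntegral.integral_of_le hT]
  calc ∫ t in Set.Ioc 0 T, 2 * t * highPass p t ^ 2
      ≤ ∫ t in Set.Ioi 0, 2 * t * highPass p t ^ 2 := by
        refine setIntegral_mono_set hint ?_ Set.Ioc_subset_Ioi_self.eventuallyLE
        filter_upwards [self_mem_ae_restrict measurableSet_Ioi] with t (ht : 0 < t)
        simp only [Pi.zero_apply]
        positivity
    _ = p * (p * (4 * π / (9 * √3))) := by
        rw [setIntegral_congr_fun measurableSet_Ioi hscale, integral_const_mul,
          integral_comp_mul_left_Ioi (fun t => 2 * t / (1 + t ^ 3) ^ 2) 0 (inv_pos.2 hp), mul_zero,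
          integral_two_mul_div_one_add_cube_sq, inv_inv, smul_eq_mul]
    _ = 4 * π / (9 * √3) * p ^ 2 := by ring

end HighPass

section ShiftedSums

variable {α : ℝ}

lemma abs_intCast_add_pos (hα : ∀ m : ℤ, α ≠ m) (k : ℤ) : 0 < |(k : ℝ) + α| :=
  abs_pos.2 fun h => hα (-k) (by push_cast; linarith)

lemma summable_inv_abs_intCast_add_pow (α : ℝ) {s : ℕ} (hs : 1 < s) :
    Summable fun k : ℤ => (|(k : ℝ) + α| ^ s)⁻¹ := by
  simpa only [rpow_natCast, one_div] using
    (summable_one_div_int_add_rpow α s).2 (by exact_mod_cast hs)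

lemma div_natCast_add_sq_le {t : ℝ} (ht : 1 / 2 < t) (n : ℕ) :
    t / (n + t) ^ 2 ≤ t / (n + t - 1 / 2) - t / ((n + 1 : ℕ) + t - 1 / 2) := by
  have hleft : (0 : ℝ) < n + t - 1 / 2 := by linarith
  have hright : (0 : ℝ) < (n + 1 : ℕ) + t - 1 / 2 := by
    push_cast
    linarith
  rw [div_sub_div _ _ hleft.ne' hright.ne', div_le_div_iff₀ (by positivity) (by positivity)]
  push_cast
  nlinarith

lemma sum_range_div_natCast_add_sq_le {t : ℝ} (ht : 1 ≤ t) (n : ℕ) :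
    ∑ k ∈ Finset.range n, t / ((k : ℝ) + t) ^ 2 ≤ 2 := by
  have hlast : 0 ≤ t / (n + t - 1 / 2) := div_nonneg (by linarith) (by linarith)
  have hfirst : t / ((0 : ℕ) + t - 1 / 2) ≤ 2 := by
    push_cast
    rw [div_le_iff₀ (by linarith)]
    linarith
  calc ∑ k ∈ Finset.range n, t / ((k : ℝ) + t) ^ 2
      ≤ ∑ k ∈ Finset.range n, (t / (k + t - 1 / 2) - t / ((k + 1 : ℕ) + t - 1 / 2)) :=
        Finset.sum_le_sum fun k _ => div_natCast_add_sq_le (by linarith) k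
    _ = t / ((0 : ℕ) + t - 1 / 2) - t / (n + t - 1 / 2) :=
        Finset.sum_range_sub' (fun k : ℕ => t / ((k : ℝ) + t - 1 / 2)) n
    _ ≤ 2 := by linarith

lemma summable_div_abs_intCast_add_add_sq (hα : ∀ m : ℤ, α ≠ m) {t : ℝ} (ht : 0 ≤ t) :
    Summable fun k : ℤ => t / (|(k : ℝ) + α| + t) ^ 2 := by
  refine ((summable_inv_abs_intCast_add_pow α one_lt_two).mul_left t).of_nonneg_of_le
    (fun k => by positivity) fun k => ?_
  have hk := abs_intCast_add_pos hα k
  rw [div_eq_mul_inv]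
  gcongr
  linarith

lemma tsum_div_abs_natCast_add_add_sq_le {θ t : ℝ} (hθ : 0 ≤ θ) (ht : 1 ≤ t) :
    ∑' n : ℕ, t / (|((n : ℤ) : ℝ) + θ| + t) ^ 2 ≤ 2 := by
  refine Real.tsum_le_of_sum_range_le (fun n => by positivity) fun n =>
    (Finset.sum_le_sum fun k _ => ?_).trans (sum_range_div_natCast_add_sq_le ht n)
  rw [Int.cast_natCast, abs_of_nonneg (by positivity)]
  gcongr
  linarith

lemma tsum_div_abs_neg_natCast_add_add_sq_le {θ t : ℝ} (hθ : θ ≤ 1) (ht : 1 ≤ t) :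
    ∑' n : ℕ, t / (|((-(n + 1) : ℤ) : ℝ) + θ| + t) ^ 2 ≤ 2 := by
  refine Real.tsum_le_of_sum_range_le (fun n => by positivity) fun n =>
    (Finset.sum_le_sum fun k _ => ?_).trans (sum_range_div_natCast_add_sq_le ht n)
  push_cast
  rw [abs_of_nonpos (by linarith)]
  gcongr
  linarith

lemma tsum_div_abs_intCast_add_add_sq_le (hα : ∀ m : ℤ, α ≠ m) {t : ℝ} (ht : 1 ≤ t) :
    ∑' k : ℤ, t / (|(k : ℝ) + α| + t) ^ 2 ≤ 4 := by
  obtain ⟨term, hterm⟩ : ∃ term : ℤ → ℝ,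
      term = fun k : ℤ => t / (|(k : ℝ) + Int.fract α| + t) ^ 2 := ⟨_, rfl⟩
  have hshift : (fun k : ℤ => t / (|(k : ℝ) + α| + t) ^ 2) = term ∘ Equiv.addRight ⌊α⌋ := by
    ext k
    simp only [hterm, Function.comp_apply, Equiv.coe_addRight, Int.cast_add, add_assoc,
      Int.floor_add_fract]
  have hsummable : Summable term := by
    rw [← Equiv.summable_iff (Equiv.addRight ⌊α⌋), ← hshift]
    exact summable_div_abs_intCast_add_add_sq hα (by linarith)
  have hsplit : ∑' k, term k = ∑' n : ℕ, term n + ∑' n : ℕ, term (-(n + 1)) :=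
    tsum_of_nat_of_neg_add_one (hsummable.comp_injective Nat.cast_injective)
      (hsummable.comp_injective fun m n h => by simpa using h)
  calc ∑' k : ℤ, t / (|(k : ℝ) + α| + t) ^ 2 = ∑' k, term k := by
        rw [hshift]
        exact (Equiv.addRight ⌊α⌋).tsum_eq term
    _ ≤ 2 + 2 := by
        rw [hsplit, hterm]
        exact add_le_add (tsum_div_abs_natCast_add_add_sq_le (Int.fract_nonneg α) ht)
          (tsum_div_abs_neg_natCast_add_add_sq_le (Int.fract_lt_one α).le ht)
    _ = 4 := by norm_num

lemma pow_five_mul_inv_cube_add_cube_sq_le {p t : ℝ} (hp : 0 < p) (ht : 0 < t) :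
    t ^ 5 * ((p ^ 3 + t ^ 3) ^ 2)⁻¹ ≤ 4 * (t / (p + t) ^ 2) := by
  have hmean : t ^ 2 * (p + t) ≤ 2 * (p ^ 3 + t ^ 3) := by
    rcases le_total p t with h | h
    · nlinarith [pow_pos hp 3, mul_nonneg (sq_nonneg t) (sub_nonneg.2 h)]
    · have : t ^ 2 * p ≤ p ^ 2 * p := by gcongr
      nlinarith [pow_pos ht 3]
  have hsq : (t ^ 2 * (p + t)) ^ 2 ≤ (2 * (p ^ 3 + t ^ 3)) ^ 2 := by gcongr
  rw [← div_eq_mul_inv, mul_div, div_le_div_iff₀ (by positivity) (by positivity)]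
  nlinarith

end ShiftedSums

section SupF

variable {α : ℝ}

lemma rpow_five_thirds_pow_three {t : ℝ} (ht : 0 ≤ t) : (t ^ 3) ^ ((5 : ℝ) / 3) = t ^ 5 := by
  rw [← rpow_natCast, ← rpow_mul ht, ← rpow_natCast]
  norm_num

lemma summable_inv_abs_cube_add_sq (hα : ∀ m : ℤ, α ≠ m) {b : ℝ} (hb : 0 ≤ b) :
    Summable fun k : ℤ => ((|(k : ℝ) + α| ^ 3 + b) ^ 2)⁻¹ := by
  refine (summable_inv_abs_intCast_add_pow α (s := 3 * 2) (by norm_num)).of_nonneg_of_le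
    (fun k => by positivity) fun k => ?_
  have hk := abs_intCast_add_pos hα k
  rw [pow_mul]
  gcongr
  linarith

lemma Fsum_le_of_le_one (hα : ∀ m : ℤ, α ≠ m) {b : ℝ} (hb : 0 ≤ b) (hb1 : b ≤ 1) :
    Fsum α b ≤ ∑' k : ℤ, ((|(k : ℝ) + α| ^ 3 + 0) ^ 2)⁻¹ := by
  have htsum : ∑' k : ℤ, ((|(k : ℝ) + α| ^ 3 + b) ^ 2)⁻¹ ≤
      ∑' k : ℤ, ((|(k : ℝ) + α| ^ 3 + 0) ^ 2)⁻¹ := by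
    refine (summable_inv_abs_cube_add_sq hα hb).tsum_le_tsum (fun k => ?_)
      (summable_inv_abs_cube_add_sq hα le_rfl)
    have hk := abs_intCast_add_pos hα k
    gcongr
  exact (mul_le_of_le_one_left (tsum_nonneg fun k => by positivity)
    (rpow_le_one hb hb1 (by norm_num))).trans htsum

lemma Fsum_le_of_one_le (hα : ∀ m : ℤ, α ≠ m) {b : ℝ} (hb : 1 ≤ b) : Fsum α b ≤ 16 := by
  obtain ⟨t, ht, rfl⟩ : ∃ t : ℝ, 1 ≤ t ∧ t ^ 3 = b :=
    ⟨b ^ (3 : ℝ)⁻¹, one_le_rpow hb (by norm_num), rpow_inv_natCast_pow (by linarith) three_ne_zero⟩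
  have ht0 : 0 < t := by linarith
  rw [Fsum, rpow_five_thirds_pow_three ht0.le, ← tsum_mul_left]
  calc ∑' k : ℤ, t ^ 5 * ((|(k : ℝ) + α| ^ 3 + t ^ 3) ^ 2)⁻¹
      ≤ ∑' k : ℤ, 4 * (t / (|(k : ℝ) + α| + t) ^ 2) :=
        ((summable_inv_abs_cube_add_sq hα (by positivity)).mul_left _).tsum_le_tsum
          (fun k => pow_five_mul_inv_cube_add_cube_sq_le (abs_intCast_add_pos hα k) ht0)
          ((summable_div_abs_intCast_add_add_sq hα ht0.le).mul_left 4)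
    _ ≤ 16 := by
        rw [tsum_mul_left]
        linarith [tsum_div_abs_intCast_add_add_sq_le hα ht]

lemma bddAbove_range_Fsum (hα : ∀ m : ℤ, α ≠ m) :
    BddAbove (Set.range fun b : {x : ℝ // 0 ≤ x} => Fsum α b.1) := by
  refine ⟨max (∑' k : ℤ, ((|(k : ℝ) + α| ^ 3 + 0) ^ 2)⁻¹) 16, ?_⟩
  rintro _ ⟨⟨b, hb⟩, rfl⟩
  rcases le_total b 1 with h | h
  · exact le_max_of_le_left (Fsum_le_of_le_one hα hb h)
  · exact le_max_of_le_right (Fsum_le_of_one_le hα h)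

lemma pow_five_mul_tsum_le_supF (hα : ∀ m : ℤ, α ≠ m) {t : ℝ} (ht : 0 ≤ t) :
    t ^ 5 * ∑' k : ℤ, ((|(k : ℝ) + α| ^ 3 + t ^ 3) ^ 2)⁻¹ ≤ supF α := by
  rw [← rpow_five_thirds_pow_three ht]
  exact le_ciSup (bddAbove_range_Fsum hα) ⟨t ^ 3, by positivity⟩

lemma supF_pos (hα : ∀ m : ℤ, α ≠ m) : 0 < supF α := by
  have hterm : 0 < ((|((0 : ℤ) : ℝ) + α| ^ 3 + 1 ^ 3) ^ 2)⁻¹ := by positivity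
  have htsum : 0 < ∑' k : ℤ, ((|(k : ℝ) + α| ^ 3 + 1 ^ 3) ^ 2)⁻¹ :=
    (summable_inv_abs_cube_add_sq hα (by norm_num)).tsum_pos (fun k => by positivity) 0 hterm
  exact htsum.trans_le (by simpa using pow_five_mul_tsum_le_supF hα zero_le_one)

end SupF

section SquareRootBound

lemma hasDerivAt_sq_mul_sqrt {t : ℝ} (ht : 0 < t) :
    HasDerivAt (fun t => t ^ 2 * √t) (5 / 2 * (t * √t)) t := by
  have hsq : HasDerivAt (fun t : ℝ => t ^ 2) (2 * t) t := by simpa using hasDerivAt_pow 2 t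
  refine (hsq.fun_mul (hasDerivAt_sqrt ht.ne')).congr_deriv ?_
  field_simp
  rw [sq_sqrt ht.le]
  ring

lemma integral_two_mul_mul_sub_mul_sqrt_sq {r s : ℝ} (hr : 0 ≤ r) (hs : 0 < s) :
    ∫ t in (0 : ℝ)..(r / s) ^ 2, 2 * t * (r - s * √t) ^ 2 = r ^ 6 / (15 * s ^ 4) := by
  have hderiv : ∀ t ∈ Set.Ioo 0 ((r / s) ^ 2), HasDerivAt
      (fun t => r ^ 2 * t ^ 2 - 8 / 5 * r * s * (t ^ 2 * √t) + 2 / 3 * s ^ 2 * t ^ 3)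
      (2 * t * (r - s * √t) ^ 2) t := by
    intro t ht
    have hcube : HasDerivAt (fun t : ℝ => t ^ 3) (3 * t ^ 2) t := by simpa using hasDerivAt_pow 3 t
    have hsq : HasDerivAt (fun t : ℝ => t ^ 2) (2 * t) t := by simpa using hasDerivAt_pow 2 t
    refine (((hsq.const_mul (r ^ 2)).sub ((hasDerivAt_sq_mul_sqrt ht.1).const_mul
      (8 / 5 * r * s))).add (hcube.const_mul (2 / 3 * s ^ 2))).congr_deriv ?_
    linear_combination (-2 * t * s ^ 2) * sq_sqrt ht.1.le
  rw [intervalIntegral.integral_eq_sub_of_hasDerivAt_of_le (by positivity)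
    (by fun_prop) hderiv (Continuous.intervalIntegrable (by fun_prop) _ _), sqrt_sq (by positivity)]
  field_simp
  ring

lemma pow_six_div_le_integral_of_le_add_mul_sqrt {r s T : ℝ} {g : ℝ → ℝ} (hr : 0 ≤ r)
    (hs : 0 < s) (hT : (r / s) ^ 2 ≤ T) (hg : Continuous g)
    (hrg : ∀ t, 0 ≤ t → r ≤ g t + s * √t) :
    r ^ 6 / (15 * s ^ 4) ≤ ∫ t in (0 : ℝ)..T, 2 * t * g t ^ 2 := by
  have hint : ∀ b, IntervalIntegrable (fun t => 2 * t * g t ^ 2) volume 0 b :=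
    fun b => Continuous.intervalIntegrable (by fun_prop) _ _
  rw [← integral_two_mul_mul_sub_mul_sqrt_sq hr hs]
  calc ∫ t in (0 : ℝ)..(r / s) ^ 2, 2 * t * (r - s * √t) ^ 2
      ≤ ∫ t in (0 : ℝ)..(r / s) ^ 2, 2 * t * g t ^ 2 := by
        refine intervalIntegral.integral_mono_on (by positivity)
          (Continuous.intervalIntegrable (by fun_prop) _ _) (hint _) fun t ht => ?_
        have hsqrt : s * √t ≤ r := by
          rw [mul_comm, ← le_div_iff₀ hs]
          exact sqrt_le_iff.2 ⟨by positivity, ht.2⟩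
        have hle : r - s * √t ≤ g t := by linarith [hrg t ht.1]
        have ht0 := ht.1
        gcongr
    _ ≤ ∫ t in (0 : ℝ)..T, 2 * t * g t ^ 2 := by
        refine intervalIntegral.integral_mono_interval le_rfl (by positivity) hT ?_ (hint T)
        filter_upwards [self_mem_ae_restrict measurableSet_Ioc] with t ht
        have ht0 := ht.1
        simp only [Pi.zero_apply]
        positivity

end SquareRootBound

section DensityMatrix

lemma trace_pow_eq_sum_eigenvalues_pow {𝕜 n : Type*} [RCLike 𝕜] [Fintype n] [DecidableEq n]
    {A : Matrix n n 𝕜} (hA : A.IsHermitian) (k : ℕ) :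
    (A ^ k).trace = ∑ i, (hA.eigenvalues i : 𝕜) ^ k := by
  conv_lhs => rw [hA.spectral_theorem, ← map_pow, Unitary.conjStarAlgAut_apply,
    Matrix.trace_mul_cycle]
  simp [Matrix.diagonal_pow, Matrix.trace_diagonal]

variable {ι κ : Type*}

/-- The matrix `∑ₙ vₙ vₙ*` of a family of vectors, `U(x)` for the family `ψₙ(x)`. -/
def densityMatrix [Fintype ι] (v : ι → EuclideanSpace ℂ κ) : Matrix κ κ ℂ :=
  Matrix.of fun j l => ∑ n, v n j * conj (v n l)

lemma isHermitian_densityMatrix [Fintype ι] (v : ι → EuclideanSpace ℂ κ) :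
    (densityMatrix v).IsHermitian := by
  ext j l
  simp [densityMatrix, mul_comm]

variable [Fintype κ]

/-- The analysis operator `e ↦ (⟪vₙ, e⟫)ₙ` of a family of vectors. -/
noncomputable def analysis (v : ι → EuclideanSpace ℂ κ) (e : EuclideanSpace ℂ κ) :
    EuclideanSpace ℂ ι :=
  WithLp.toLp 2 fun n => ⟪v n, e⟫_ℂ

lemma analysis_sub (v w : ι → EuclideanSpace ℂ κ) (e : EuclideanSpace ℂ κ) :
    analysis (fun n => v n - w n) e = analysis v e - analysis w e := by
  ext n
  simp [analysis]

lemma continuous_analysis {h : ℝ → ι → EuclideanSpace ℂ κ} (hh : ∀ n, Continuous fun t => h t n)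
    (e : EuclideanSpace ℂ κ) : Continuous fun t => analysis (h t) e :=
  (PiLp.continuous_toLp 2 _).comp (continuous_pi fun n => (hh n).inner continuous_const)

variable [Fintype ι]

lemma norm_analysis_sq (v : ι → EuclideanSpace ℂ κ) (e : EuclideanSpace ℂ κ) :
    ‖analysis v e‖ ^ 2 = ∑ n, ‖⟪v n, e⟫_ℂ‖ ^ 2 :=
  EuclideanSpace.norm_sq_eq _

lemma norm_analysis_sq_le (v : ι → EuclideanSpace ℂ κ) (e : EuclideanSpace ℂ κ) :
    ‖analysis v e‖ ^ 2 ≤ (∑ n, ‖v n‖ ^ 2) * ‖e‖ ^ 2 := by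
  rw [norm_analysis_sq, Finset.sum_mul]
  gcongr with n
  rw [← mul_pow]
  gcongr
  exact norm_inner_le_norm (v n) e

lemma sum_norm_analysis_sq {ι' : Type*} [Fintype ι'] (v : ι → EuclideanSpace ℂ κ)
    (b : OrthonormalBasis ι' ℂ (EuclideanSpace ℂ κ)) :
    ∑ i, ‖analysis v (b i)‖ ^ 2 = ∑ n, ‖v n‖ ^ 2 := by
  simp only [norm_analysis_sq]
  rw [Finset.sum_comm]
  exact Finset.sum_congr rfl fun n _ => b.sum_sq_norm_inner_left (v n)

lemma star_dotProduct_densityMatrix_mulVec (v : ι → EuclideanSpace ℂ κ)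
    (e : EuclideanSpace ℂ κ) :
    star e.ofLp ⬝ᵥ (densityMatrix v *ᵥ e.ofLp) = (‖analysis v e‖ ^ 2 : ℝ) := by
  have hsum : densityMatrix v = ∑ n, Matrix.vecMulVec (v n).ofLp (star (v n).ofLp) := by
    ext j l
    simp [densityMatrix, Matrix.sum_apply, Matrix.vecMulVec_apply]
  rw [hsum, norm_analysis_sq, Matrix.sum_mulVec, dotProduct_sum]
  push_cast
  refine Finset.sum_congr rfl fun n _ => ?_
  rw [Matrix.vecMulVec_mulVec, ← Complex.conj_mul', EuclideanSpace.inner_eq_star_dotProduct,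
    dotProduct_smul, op_smul_eq_mul, starRingEnd_apply, ← Matrix.dotProduct_star,
    dotProduct_comm (star e.ofLp), dotProduct_comm (star (v n).ofLp)]

variable [DecidableEq κ]

lemma eigenvalues_densityMatrix (v : ι → EuclideanSpace ℂ κ) (i : κ) :
    (isHermitian_densityMatrix v).eigenvalues i =
      ‖analysis v ((isHermitian_densityMatrix v).eigenvectorBasis i)‖ ^ 2 := by
  rw [Matrix.IsHermitian.eigenvalues_eq, star_dotProduct_densityMatrix_mulVec]
  exact Complex.ofReal_re _

lemma re_trace_densityMatrix_pow (v : ι → EuclideanSpace ℂ κ) (k : ℕ) :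
    ((densityMatrix v ^ k).trace).re =
      ∑ i, (‖analysis v ((isHermitian_densityMatrix v).eigenvectorBasis i)‖ ^ 2) ^ k := by
  simp only [trace_pow_eq_sum_eigenvalues_pow (isHermitian_densityMatrix v), Complex.re_sum,
    ← eigenvalues_densityMatrix, Complex.coe_algebraMap, ← Complex.ofReal_pow, Complex.ofReal_re]

theorem re_trace_densityMatrix_pow_three_le {v : ι → EuclideanSpace ℂ κ}
    {h : ℝ → ι → EuclideanSpace ℂ κ} {s T : ℝ} (hs : 0 < s) (hT : ∑ n, ‖v n‖ ^ 2 ≤ s ^ 2 * T)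
    (hh : ∀ n, Continuous fun t => h t n)
    (hlow : ∀ t, 0 ≤ t → ∀ e, ‖analysis (fun n => v n - h t n) e‖ ≤ s * √t * ‖e‖) :
    ((densityMatrix v ^ 3).trace).re / (15 * s ^ 4) ≤
      ∫ t in (0 : ℝ)..T, 2 * t * ∑ n, ‖h t n‖ ^ 2 := by
  set b := (isHermitian_densityMatrix v).eigenvectorBasis
  have hcont : ∀ i, Continuous fun t => ‖analysis (h t) (b i)‖ :=
    fun i => (continuous_analysis hh (b i)).norm
  have hbound : ∀ i, ‖analysis v (b i)‖ ^ 6 / (15 * s ^ 4) ≤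
      ∫ t in (0 : ℝ)..T, 2 * t * ‖analysis (h t) (b i)‖ ^ 2 := by
    refine fun i => pow_six_div_le_integral_of_le_add_mul_sqrt (norm_nonneg _) hs ?_ (hcont i)
      fun t ht => ?_
    · rw [div_pow, div_le_iff₀ (by positivity), mul_comm]
      simpa using (norm_analysis_sq_le v (b i)).trans_eq (by simp) |>.trans hT
    · have hle := hlow t ht (b i)
      rw [analysis_sub, b.norm_eq_one, mul_one] at hle
      linarith [norm_le_norm_add_norm_sub' (analysis v (b i)) (analysis (h t) (b i))]
  have hint : ∀ i, IntervalIntegrable (fun t => 2 * t * ‖analysis (h t) (b i)‖ ^ 2) volume 0 T :=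
    fun i => Continuous.intervalIntegrable (by have := hcont i; fun_prop) _ _
  calc ((densityMatrix v ^ 3).trace).re / (15 * s ^ 4)
      = ∑ i, ‖analysis v (b i)‖ ^ 6 / (15 * s ^ 4) := by
        simp only [re_trace_densityMatrix_pow, ← pow_mul, Finset.sum_div, b]
    _ ≤ ∑ i, ∫ t in (0 : ℝ)..T, 2 * t * ‖analysis (h t) (b i)‖ ^ 2 :=
        Finset.sum_le_sum fun i _ => hbound i
    _ = ∫ t in (0 : ℝ)..T, 2 * t * ∑ n, ‖h t n‖ ^ 2 := by
        rw [← intervalIntegral.integral_finsetSum fun i _ => hint i]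
        simp only [← Finset.mul_sum, sum_norm_analysis_sq]

end DensityMatrix

section Bessel

lemma exists_inner_eq_tsum_mul_repr {σ 𝕜 H : Type*} [RCLike 𝕜] [NormedAddCommGroup H]
    [InnerProductSpace 𝕜 H] (b : HilbertBasis σ 𝕜 H) {w : σ → 𝕜}
    (hw : Summable fun k => ‖w k‖ ^ 2) :
    ∃ g : H, ‖g‖ ^ 2 = ∑' k, ‖w k‖ ^ 2 ∧ ∀ x, ⟪g, x⟫_𝕜 = ∑' k, w k * b.repr x k := by
  have hmem : Memℓp (fun k => conj (w k)) 2 := by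
    refine memℓp_gen ?_
    simpa [RCLike.norm_conj] using hw
  refine ⟨b.repr.symm ⟨_, hmem⟩, ?_, fun x => ?_⟩
  · rw [LinearIsometryEquiv.norm_map, ← rpow_natCast]
    simpa [RCLike.norm_conj] using lp.norm_rpow_eq_tsum (p := 2) (by simp)
      (⟨_, hmem⟩ : lp (fun _ : σ => 𝕜) 2)
  · rw [← b.repr.inner_map_map, LinearIsometryEquiv.apply_symm_apply, lp.inner_eq_tsum]
    simp [RCLike.inner_apply, mul_comm]

variable {ι κ H : Type*} [Fintype ι] [Fintype κ] [NormedAddCommGroup H] [InnerProductSpace ℂ H]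

lemma norm_analysis_inner_le {X : ι → κ → H} (hX : Orthonormal ℂ fun n => WithLp.toLp 2 (X n))
    (g : H) (e : EuclideanSpace ℂ κ) :
    ‖analysis (fun n => WithLp.toLp 2 fun j => ⟪g, X n j⟫_ℂ) e‖ ≤ ‖g‖ * ‖e‖ := by
  -- Bessel's inequality for `X` and the vector `(eⱼ g)ⱼ`.
  have hnorm : ‖WithLp.toLp 2 fun j => e j • g‖ ^ 2 = (‖g‖ * ‖e‖) ^ 2 := by
    rw [PiLp.norm_sq_eq_of_L2, mul_pow, EuclideanSpace.norm_sq_eq, Finset.mul_sum]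
    simp only [norm_smul, mul_pow, mul_comm]
  have hinner : ∀ n, ⟪(WithLp.toLp 2 fun j => ⟪g, X n j⟫_ℂ : EuclideanSpace ℂ κ), e⟫_ℂ =
      ⟪WithLp.toLp 2 (X n), WithLp.toLp 2 fun j => e j • g⟫_ℂ := by
    intro n
    simp [PiLp.inner_apply, inner_smul_right]
  refine le_of_sq_le_sq ?_ (by positivity)
  rw [norm_analysis_sq, ← hnorm]
  simp only [hinner]
  exact hX.sum_inner_products_le _

end Bessel

section FourierSeries

open AddCircle

variable {T : ℝ} [Fact (0 < T)]

lemma summable_smul_fourier {d : ℤ → ℂ} (hd : Summable d) :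
    Summable fun k => d k • (fourier k : C(AddCircle T, ℂ)) :=
  .of_norm (by simpa only [norm_smul, fourier_norm, mul_one] using hd.norm)

lemma fourierCoeff_tsum_smul_fourier {d : ℤ → ℂ} (hd : Summable d) (n : ℤ) :
    fourierCoeff (∑' k, d k • (fourier k : C(AddCircle T, ℂ)) : C(AddCircle T, ℂ)) n = d n := by
  have hinner : ∀ k, ⟪fourierLp (T := T) 2 n,
      ContinuousMap.toLp 2 haarAddCircle ℂ (d k • fourier k)⟫_ℂ = if n = k then d k else 0 := by
    intro k
    rw [map_smul, inner_smul_right, orthonormal_iff_ite.1 orthonormal_fourier n k, mul_ite, mul_one,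
      mul_zero]
  rw [← fourierCoeff_toLp, ← fourierBasis_repr, HilbertBasis.repr_apply_apply, coe_fourierBasis,
    (ContinuousMap.toLp 2 haarAddCircle ℂ).map_tsum (summable_smul_fourier hd),
    ← innerSL_apply_apply, (innerSL ℂ (fourierLp 2 n)).map_tsum
      ((summable_smul_fourier hd).mapL (ContinuousMap.toLp 2 haarAddCircle ℂ))]
  simp only [innerSL_apply_apply, hinner, tsum_ite_eq']

lemma hasSum_sq_norm_fourierCoeff (g : C(AddCircle T, ℂ)) :
    HasSum (fun k => ‖fourierCoeff g k‖ ^ 2) (∫ x, ‖g x‖ ^ 2 ∂haarAddCircle) := by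
  have hsum := hasSum_sq_fourierCoeff (ContinuousMap.toLp 2 haarAddCircle ℂ g)
  have hcongr : ∫ x, ‖ContinuousMap.toLp 2 haarAddCircle ℂ g x‖ ^ 2 ∂haarAddCircle =
      ∫ x, ‖g x‖ ^ 2 ∂haarAddCircle := by
    refine integral_congr_ae ?_
    filter_upwards [ContinuousMap.coeFn_toLp (p := 2) haarAddCircle (𝕜 := ℂ) g] with x hx
    rw [hx]
  simpa only [fourierCoeff_toLp, hcongr] using hsum

end FourierSeries

section HighPassPart

open AddCircle

variable {T : ℝ} [Fact (0 < T)]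

/-- The part of `f` above the scale `t`: the `k`-th Fourier coefficient, of frequency `p k`, is
damped by `highPass (p k) t`. -/
noncomputable def highPassPart (p : ℤ → ℝ) (f : C(AddCircle T, ℂ)) (t : ℝ) :
    C(AddCircle T, ℂ) :=
  ∑' k, (highPass (p k) t * fourierCoeff f k) • fourier k

lemma norm_highPass_mul_le {p : ℝ} (hp : 0 < p) (t : ℝ) (c : ℂ) : ‖highPass p t * c‖ ≤ ‖c‖ := by
  rw [norm_mul, Complex.norm_of_nonneg (highPass_nonneg hp t)]
  exact mul_le_of_le_one_left (norm_nonneg c) (highPass_le_one hp t)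

variable {p : ℤ → ℝ} (hp : ∀ k, 0 < p k) {f : C(AddCircle T, ℂ)} (hf : Summable (fourierCoeff f))
include hp hf

lemma summable_highPass_mul_fourierCoeff (t : ℝ) :
    Summable fun k => highPass (p k) t * fourierCoeff f k :=
  .of_norm_bounded hf.norm fun k => norm_highPass_mul_le (hp k) t _

lemma continuous_highPassPart : Continuous (highPassPart p f) := by
  refine continuous_tsum (fun k => ?_) hf.norm fun k t => ?_
  · have := continuous_highPass (hp k)
    fun_prop
  · rw [norm_smul, fourier_norm, mul_one]
    exact norm_highPass_mul_le (hp k) t _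

lemma continuous_highPassPart_apply :
    Continuous fun q : ℝ × AddCircle T => highPassPart p f q.1 q.2 :=
  ((continuous_highPassPart hp hf).comp continuous_fst).eval continuous_snd

lemma sub_highPassPart_apply (t : ℝ) (x : AddCircle T) :
    f x - highPassPart p f t x =
      ∑' k, (1 - highPass (p k) t : ℝ) * fourier k x * fourierCoeff f k := by
  have hpart : HasSum (fun k => (highPass (p k) t * fourierCoeff f k) • fourier k x)
      (highPassPart p f t x) :=
    ContinuousMap.hasSum_apply
      (summable_smul_fourier (summable_highPass_mul_fourierCoeff hp hf t)).hasSum x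
  rw [← ((has_pointwise_sum_fourier_series_of_summable hf x).sub hpart).tsum_eq]
  refine tsum_congr fun k => ?_
  push_cast
  simp only [smul_eq_mul]
  ring

lemma hasSum_highPass_sq_mul (t : ℝ) :
    HasSum (fun k => highPass (p k) t ^ 2 * ‖fourierCoeff f k‖ ^ 2)
      (∫ x, ‖highPassPart p f t x‖ ^ 2 ∂haarAddCircle) := by
  refine (hasSum_sq_norm_fourierCoeff (highPassPart p f t)).congr_fun fun k => ?_
  rw [highPassPart, fourierCoeff_tsum_smul_fourier (summable_highPass_mul_fourierCoeff hp hf t),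
    norm_mul, mul_pow, Complex.norm_of_nonneg (highPass_nonneg (hp k) t)]

lemma integral_two_mul_mul_integral_norm_sq_highPassPart_le {S : ℝ} (hS : 0 ≤ S)
    (hkin : Summable fun k => p k ^ 2 * ‖fourierCoeff f k‖ ^ 2) :
    ∫ t in (0 : ℝ)..S, 2 * t * ∫ x, ‖highPassPart p f t x‖ ^ 2 ∂haarAddCircle ≤
      4 * π / (9 * √3) * ∑' k, p k ^ 2 * ‖fourierCoeff f k‖ ^ 2 := by
  have hsq := (hasSum_sq_norm_fourierCoeff f).summable
  have hsum : HasSum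
      (fun k => ∫ t in (0 : ℝ)..S, 2 * t * highPass (p k) t ^ 2 * ‖fourierCoeff f k‖ ^ 2)
      (∫ t in (0 : ℝ)..S, 2 * t * ∫ x, ‖highPassPart p f t x‖ ^ 2 ∂haarAddCircle) := by
    refine intervalIntegral.hasSum_integral_of_dominated_convergence
      (fun k _ => 2 * S * ‖fourierCoeff f k‖ ^ 2) (fun k => ?_) (fun k => .of_forall fun t ht => ?_)
      (.of_forall fun t _ => hsq.mul_left _) (by simp) (.of_forall fun t _ => ?_)
    · have := continuous_highPass (hp k)
      exact Continuous.aestronglyMeasurable (by fun_prop)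
    · rw [Set.uIoc_of_le hS] at ht
      have h0 := highPass_nonneg (hp k) t
      have hpos := ht.1
      rw [norm_of_nonneg (by positivity), ← mul_one (2 * S)]
      gcongr
      exacts [ht.2, pow_le_one₀ h0 (highPass_le_one (hp k) t)]
    · simpa only [mul_assoc] using (hasSum_highPass_sq_mul hp hf t).mul_left (2 * t)
  rw [← hsum.tsum_eq, ← tsum_mul_left]
  refine hsum.summable.tsum_le_tsum (fun k => ?_) (hkin.mul_left _)
  rw [intervalIntegral.integral_mul_const, ← mul_assoc]
  gcongr
  exact integral_two_mul_mul_highPass_sq_le (hp k) hS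

end HighPassPart

section VectorFields

lemma integrable_restrict_uIoc_prod {X : Type*} [TopologicalSpace X] [CompactSpace X] [T2Space X]
    [MeasurableSpace X] [BorelSpace X] [SecondCountableTopology X] {μ : Measure X}
    [IsFiniteMeasure μ] {F : ℝ × X → ℝ} (hF : Continuous F) (a b : ℝ) :
    Integrable F ((volume.restrict (Set.uIoc a b)).prod μ) := by
  rw [← Measure.restrict_univ (μ := μ), Measure.prod_restrict]
  exact (hF.continuousOn.integrableOn_compact (isCompact_uIcc.prod isCompact_univ)).mono_set
    (Set.prod_mono Set.uIoc_subset_uIcc subset_rfl)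

variable {ι κ X : Type*} [TopologicalSpace X]

/-- The vectors `(fₙⱼ(x))ⱼ` at the point `x` of a family of continuous vector-valued functions
given by their components. -/
noncomputable def fieldAt (f : ι → κ → C(X, ℂ)) (x : X) (n : ι) : EuclideanSpace ℂ κ :=
  WithLp.toLp 2 fun j => f n j x

lemma continuous_fieldAt (f : ι → κ → C(X, ℂ)) (n : ι) : Continuous fun x => fieldAt f x n :=
  (PiLp.continuous_toLp 2 _).comp (continuous_pi fun j => (f n j).continuous)

variable [Fintype ι] [Fintype κ]

lemma sum_norm_fieldAt_sq (f : ι → κ → C(X, ℂ)) (x : X) :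
    ∑ n, ‖fieldAt f x n‖ ^ 2 = ∑ n, ∑ j, ‖f n j x‖ ^ 2 := by
  simp only [fieldAt, EuclideanSpace.norm_sq_eq]

lemma integral_sum_norm_fieldAt_sq [CompactSpace X] [MeasurableSpace X] [BorelSpace X]
    (μ : Measure X) [IsFiniteMeasure μ] (f : ι → κ → C(X, ℂ)) :
    ∫ x, ∑ n, ‖fieldAt f x n‖ ^ 2 ∂μ = ∑ n, ∑ j, ∫ x, ‖f n j x‖ ^ 2 ∂μ := by
  have hint : ∀ n j, Integrable (fun x => ‖f n j x‖ ^ 2) μ := fun n j =>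
    Continuous.integrable_of_hasCompactSupport (by fun_prop) (.of_compactSpace _)
  simp only [sum_norm_fieldAt_sq]
  rw [integral_finsetSum _ fun n _ => integrable_finsetSum _ fun j _ => hint n j]
  exact Finset.sum_congr rfl fun n _ => integral_finsetSum _ fun j _ => hint n j

lemma exists_sum_norm_fieldAt_sq_le [CompactSpace X] (f : ι → κ → C(X, ℂ)) :
    ∃ B, 0 ≤ B ∧ ∀ x, ∑ n, ‖fieldAt f x n‖ ^ 2 ≤ B := by
  refine ⟨∑ n, ∑ j, ‖f n j‖ ^ 2, by positivity, fun x => ?_⟩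
  rw [sum_norm_fieldAt_sq]
  gcongr with n _ j _
  exact (f n j).norm_coe_le_norm x

lemma continuous_re_trace_densityMatrix_fieldAt_pow [DecidableEq κ] (f : ι → κ → C(X, ℂ)) (k : ℕ) :
    Continuous fun x => ((densityMatrix (fieldAt f x) ^ k).trace).re := by
  have hmatrix : Continuous fun x => densityMatrix (fieldAt f x) := by
    refine continuous_matrix fun j l => ?_
    simp only [densityMatrix, fieldAt, Matrix.of_apply]
    fun_prop
  exact Complex.continuous_re.comp (hmatrix.pow k).matrix_trace

end VectorFields

section OrthonormalFields

open AddCircle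

variable {T : ℝ} [Fact (0 < T)] {ι κ : Type*}
  {p : ℤ → ℝ} (hp : ∀ k, 0 < p k) {f : ι → κ → C(AddCircle T, ℂ)}
  (hf : ∀ n j, Summable (fourierCoeff (f n j)))
include hp hf

lemma continuous_fieldAt_highPassPart (x : AddCircle T) (n : ι) :
    Continuous fun t => fieldAt (fun n j => highPassPart p (f n j) t) x n :=
  (PiLp.continuous_toLp 2 _).comp (continuous_pi fun j =>
    (ContinuousEvalConst.continuous_eval_const x).comp (continuous_highPassPart hp (hf n j)))

variable [Fintype ι] [Fintype κ]

lemma continuous_two_mul_mul_sum_norm_fieldAt_highPassPart_sq :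
    Continuous fun q : ℝ × AddCircle T => 2 * q.1 *
      ∑ n, ‖fieldAt (fun n j => highPassPart p (f n j) q.1) q.2 n‖ ^ 2 := by
  have hcont := fun n j => continuous_highPassPart_apply hp (hf n j)
  simp only [sum_norm_fieldAt_sq]
  fun_prop

lemma intervalIntegral_integral_sum_norm_fieldAt_highPassPart_sq_le {S : ℝ} (hS : 0 ≤ S)
    (hkin : ∀ n j, Summable fun k => p k ^ 2 * ‖fourierCoeff (f n j) k‖ ^ 2) :
    ∫ t in (0 : ℝ)..S, ∫ x, 2 * t *
        ∑ n, ‖fieldAt (fun n j => highPassPart p (f n j) t) x n‖ ^ 2 ∂haarAddCircle ≤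
      4 * π / (9 * √3) * ∑ n, ∑ j, ∑' k, p k ^ 2 * ‖fourierCoeff (f n j) k‖ ^ 2 := by
  have hint : ∀ n j, IntervalIntegrable
      (fun t => 2 * t * ∫ x, ‖highPassPart p (f n j) t x‖ ^ 2 ∂haarAddCircle) volume 0 S := by
    intro n j
    have hcont := continuous_highPassPart_apply hp (hf n j)
    simp only [← integral_const_mul]
    exact intervalIntegrable_iff.2 (integrable_restrict_uIoc_prod
      (F := fun q => 2 * q.1 * ‖highPassPart p (f n j) q.1 q.2‖ ^ 2)
      (by fun_prop) 0 S).integral_prod_left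
  have hsum : ∀ t, ∫ x, 2 * t *
      ∑ n, ‖fieldAt (fun n j => highPassPart p (f n j) t) x n‖ ^ 2 ∂haarAddCircle =
      ∑ n, ∑ j, 2 * t * ∫ x, ‖highPassPart p (f n j) t x‖ ^ 2 ∂haarAddCircle := by
    intro t
    rw [integral_const_mul, integral_sum_norm_fieldAt_sq]
    simp only [Finset.mul_sum]
  simp only [hsum]
  simp only [Finset.mul_sum]
  rw [intervalIntegral.integral_finsetSum fun n _ => by
    simpa only [Finset.sum_fn] using IntervalIntegrable.sum _ fun j _ => hint n j]
  refine Finset.sum_le_sum fun n _ => ?_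
  rw [intervalIntegral.integral_finsetSum fun j _ => hint n j]
  exact Finset.sum_le_sum fun j _ =>
    integral_two_mul_mul_integral_norm_sq_highPassPart_le hp (hf n j) hS (hkin n j)

lemma norm_analysis_fieldAt_sub_highPassPart_le
    (horth : Orthonormal ℂ fun n => WithLp.toLp 2 fun j =>
      ContinuousMap.toLp 2 haarAddCircle ℂ (f n j)) {t : ℝ}
    (hlow : Summable fun k => (1 - highPass (p k) t) ^ 2) (x : AddCircle T)
    (e : EuclideanSpace ℂ κ) :
    ‖analysis (fun n => fieldAt f x n - fieldAt (fun n j => highPassPart p (f n j) t) x n) e‖ ≤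
      √(∑' k, (1 - highPass (p k) t) ^ 2) * ‖e‖ := by
  have hw : ∀ k, ‖((1 - highPass (p k) t : ℝ) : ℂ) * fourier k x‖ ^ 2 =
      (1 - highPass (p k) t) ^ 2 := by
    intro k
    rw [norm_mul, Complex.norm_real, fourier_apply, Circle.norm_coe, mul_one, norm_eq_abs, sq_abs]
  obtain ⟨g, hgnorm, hg⟩ := exists_inner_eq_tsum_mul_repr (fourierBasis (T := T))
    (w := fun k => (1 - highPass (p k) t : ℝ) * fourier k x) (by simpa only [hw] using hlow)
  simp only [hw] at hgnorm
  have hrepr : ∀ n, fieldAt f x n - fieldAt (fun n j => highPassPart p (f n j) t) x n =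
      WithLp.toLp 2 fun j => ⟪g, ContinuousMap.toLp 2 haarAddCircle ℂ (f n j)⟫_ℂ := by
    intro n
    ext j
    simp only [hg, fourierBasis_repr, fourierCoeff_toLp]
    exact sub_highPassPart_apply hp (hf n j) t x
  simp only [hrepr]
  rw [← hgnorm, sqrt_sq (norm_nonneg g)]
  exact norm_analysis_inner_le horth g e

theorem integral_re_trace_densityMatrix_pow_three_le [DecidableEq κ]
    (hkin : ∀ n j, Summable fun k => p k ^ 2 * ‖fourierCoeff (f n j) k‖ ^ 2)
    (horth : Orthonormal ℂ fun n => WithLp.toLp 2 fun j =>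
      ContinuousMap.toLp 2 haarAddCircle ℂ (f n j)) {s : ℝ} (hs : 0 < s)
    (hlow : ∀ t, 0 ≤ t → Summable fun k => (1 - highPass (p k) t) ^ 2)
    (hlow_le : ∀ t, 0 ≤ t → ∑' k, (1 - highPass (p k) t) ^ 2 ≤ s ^ 2 * t) :
    ∫ x, ((densityMatrix (fieldAt f x) ^ 3).trace).re ∂haarAddCircle ≤
      20 * π / (3 * √3) * s ^ 4 *
        ∑ n, ∑ j, ∑' k, p k ^ 2 * ‖fourierCoeff (f n j) k‖ ^ 2 := by
  obtain ⟨B, hB0, hB⟩ := exists_sum_norm_fieldAt_sq_le f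
  have hS : 0 ≤ B / s ^ 2 := by positivity
  have hpoint : ∀ x, ((densityMatrix (fieldAt f x) ^ 3).trace).re / (15 * s ^ 4) ≤
      ∫ t in (0 : ℝ)..B / s ^ 2, 2 * t *
        ∑ n, ‖fieldAt (fun n j => highPassPart p (f n j) t) x n‖ ^ 2 := by
    refine fun x => re_trace_densityMatrix_pow_three_le hs ?_
      (continuous_fieldAt_highPassPart hp hf x) fun t ht e => ?_
    · rw [mul_div_cancel₀ _ (by positivity)]
      exact hB x
    · refine (norm_analysis_fieldAt_sub_highPassPart_le hp hf horth (hlow t ht) x e).trans ?_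
      gcongr
      rw [← sqrt_sq hs.le, ← sqrt_mul (sq_nonneg s)]
      exact sqrt_le_sqrt (hlow_le t ht)
  have hjoint := integrable_restrict_uIoc_prod (μ := haarAddCircle)
    (continuous_two_mul_mul_sum_norm_fieldAt_highPassPart_sq hp hf) 0 (B / s ^ 2)
  have htrace : Integrable (fun x => ((densityMatrix (fieldAt f x) ^ 3).trace).re)
      haarAddCircle :=
    (continuous_re_trace_densityMatrix_fieldAt_pow f 3).integrable_of_hasCompactSupport
      (.of_compactSpace _)
  have hmain : (∫ x, ((densityMatrix (fieldAt f x) ^ 3).trace).re ∂haarAddCircle) / (15 * s ^ 4) ≤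
      4 * π / (9 * √3) * ∑ n, ∑ j, ∑' k, p k ^ 2 * ‖fourierCoeff (f n j) k‖ ^ 2 := by
    rw [← integral_div]
    refine (integral_mono (htrace.div_const _) ?_ hpoint).trans ?_
    · simpa only [intervalIntegral.integral_of_le hS, Set.uIoc_of_le hS] using
        hjoint.integral_prod_right
    · rw [← intervalIntegral_integral_swap hjoint]
      exact intervalIntegral_integral_sum_norm_fieldAt_highPassPart_sq_le hp hf hS hkin
  rw [div_le_iff₀ (by positivity)] at hmain
  refine hmain.trans_eq ?_
  ring

end OrthonormalFields

section ShiftedFrequencies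

open AddCircle

variable {α : ℝ}

lemma one_sub_highPass_sq (hα : ∀ m : ℤ, α ≠ m) {t : ℝ} (ht : 0 ≤ t) (k : ℤ) :
    (1 - highPass |(k : ℝ) + α| t) ^ 2 = t ^ 6 * ((|(k : ℝ) + α| ^ 3 + t ^ 3) ^ 2)⁻¹ := by
  rw [one_sub_highPass (abs_intCast_add_pos hα k) ht, div_pow, ← pow_mul, div_eq_mul_inv]

lemma summable_one_sub_highPass_sq (hα : ∀ m : ℤ, α ≠ m) {t : ℝ} (ht : 0 ≤ t) :
    Summable fun k : ℤ => (1 - highPass |(k : ℝ) + α| t) ^ 2 := by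
  simp only [one_sub_highPass_sq hα ht]
  exact (summable_inv_abs_cube_add_sq hα (by positivity)).mul_left _

lemma tsum_one_sub_highPass_sq_le (hα : ∀ m : ℤ, α ≠ m) {t : ℝ} (ht : 0 ≤ t) :
    ∑' k : ℤ, (1 - highPass |(k : ℝ) + α| t) ^ 2 ≤ supF α * t := by
  simp only [one_sub_highPass_sq hα ht, tsum_mul_left]
  calc t ^ 6 * ∑' k : ℤ, ((|(k : ℝ) + α| ^ 3 + t ^ 3) ^ 2)⁻¹
      = (t ^ 5 * ∑' k : ℤ, ((|(k : ℝ) + α| ^ 3 + t ^ 3) ^ 2)⁻¹) * t := by ring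
    _ ≤ supF α * t := by
        gcongr
        exact pow_five_mul_tsum_le_supF hα ht

lemma summable_of_summable_sq_mul_norm_sq {σ E : Type*} [NormedAddCommGroup E] [CompleteSpace E]
    {p : σ → ℝ} {c : σ → E} (hp : ∀ k, 0 < p k) (hinv : Summable fun k => (p k ^ 2)⁻¹)
    (hkin : Summable fun k => p k ^ 2 * ‖c k‖ ^ 2) : Summable c := by
  refine .of_norm_bounded (hinv.add hkin) fun k => ?_
  have hpk := hp k
  have hamgm := two_mul_le_add_sq (p k)⁻¹ (p k * ‖c k‖)
  rw [mul_assoc, inv_mul_cancel_left₀ hpk.ne', inv_pow, mul_pow] at hamgm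
  linarith [norm_nonneg (c k)]

theorem integral_re_trace_densityMatrix_pow_three_le_K2 {T : ℝ} [Fact (0 < T)] {ι κ : Type*}
    [Fintype ι] [Fintype κ] [DecidableEq κ] (hα : ∀ m : ℤ, α ≠ m) {f : ι → κ → C(AddCircle T, ℂ)}
    (hkin : ∀ n j, Summable fun k : ℤ => |(k : ℝ) + α| ^ 2 * ‖fourierCoeff (f n j) k‖ ^ 2)
    (horth : Orthonormal ℂ fun n => WithLp.toLp 2 fun j =>
      ContinuousMap.toLp 2 haarAddCircle ℂ (f n j)) :
    ∫ x, ((densityMatrix (fieldAt f x) ^ 3).trace).re ∂haarAddCircle ≤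
      (2 * π) ^ 2 * K2 α *
        ∑ n, ∑ j, ∑' k : ℤ, |(k : ℝ) + α| ^ 2 * ‖fourierCoeff (f n j) k‖ ^ 2 := by
  have hS := supF_pos hα
  have hconst : 20 * π / (3 * √3) * √(supF α) ^ 4 = (2 * π) ^ 2 * K2 α := by
    rw [pow_mul (√(supF α)) 2 2, sq_sqrt hS.le, K2]
    field_simp
    ring
  rw [← hconst]
  refine integral_re_trace_densityMatrix_pow_three_le (abs_intCast_add_pos hα)
    (fun n j => ?_) hkin horth (sqrt_pos.2 hS) (fun t ht => summable_one_sub_highPass_sq hα ht)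
    fun t ht => ?_
  · exact summable_of_summable_sq_mul_norm_sq (abs_intCast_add_pos hα)
      (summable_inv_abs_intCast_add_pow α one_lt_two) (hkin n j)
  · rw [sq_sqrt hS.le]
    exact tsum_one_sub_highPass_sq_le hα ht

end ShiftedFrequencies

section AbsoluteContinuity

/-- `f` is absolutely continuous on the segment between `a` and `b` and `f'` is its derivative at
almost every point of it. For intervals this is how Sobolev functions and their weak derivatives
are encoded: `f ∈ H¹` means `HasACDeriv f f' a b` with `f'` square integrable. -/
structure HasACDeriv {E : Type*} [NormedAddCommGroup E] [NormedSpace ℝ E] (f f' : ℝ → E)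
    (a b : ℝ) : Prop where
  absolutelyContinuousOnInterval : AbsolutelyContinuousOnInterval f a b
  ae_hasDerivAt : ∀ᵐ x, x ∈ Set.uIcc a b → HasDerivAt f (f' x) x

lemma absolutelyContinuousOnInterval_comp_of_lipschitzWith {X Y : Type*} [PseudoMetricSpace X]
    [PseudoMetricSpace Y] {K : NNReal} {φ : X → Y} (hφ : LipschitzWith K φ) {f : ℝ → X} {a b : ℝ}
    (hf : AbsolutelyContinuousOnInterval f a b) :
    AbsolutelyContinuousOnInterval (fun x => φ (f x)) a b := by
  rw [absolutelyContinuousOnInterval_iff] at hf ⊢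
  intro ε hε
  obtain ⟨δ, hδ, hf⟩ := hf (ε / (K + 1)) (by positivity)
  refine ⟨δ, hδ, fun D hD hlen => ?_⟩
  calc ∑ i ∈ Finset.range D.1, dist (φ (f (D.2 i).1)) (φ (f (D.2 i).2))
      ≤ ∑ i ∈ Finset.range D.1, (K + 1) * dist (f (D.2 i).1) (f (D.2 i).2) := by
        gcongr with i
        refine (hφ.dist_le_mul _ _).trans ?_
        gcongr
        linarith
    _ < ε := by
        rw [← Finset.mul_sum, ← lt_div_iff₀' (by positivity)]
        exact hf D hD hlen

lemma memLp_restrict_Ioc_of_continuousOn {E : Type*} [NormedAddCommGroup E] {f : ℝ → E} {a b : ℝ}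
    (hf : ContinuousOn f (Set.uIcc a b)) (p : ENNReal) :
    MemLp f p (volume.restrict (Set.Ioc a b)) := by
  obtain ⟨C, hC⟩ := isCompact_uIcc.exists_bound_of_continuousOn hf
  have hsub : Set.Ioc a b ⊆ Set.uIcc a b := Set.Ioc_subset_Icc_self.trans Set.Icc_subset_uIcc
  exact .of_bound ((hf.aestronglyMeasurable measurableSet_uIcc).mono_set hsub) C
    (ae_restrict_of_forall_mem measurableSet_Ioc fun x hx => hC x (hsub hx))

variable {E F : Type*} [NormedAddCommGroup E] [NormedSpace ℝ E] [NormedAddCommGroup F]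
  [NormedSpace ℝ F] {f f' : ℝ → E} {a b : ℝ}

lemma hasACDeriv_deriv [FiniteDimensional ℝ E] (hf : AbsolutelyContinuousOnInterval f a b) :
    HasACDeriv f (deriv f) a b where
  absolutelyContinuousOnInterval := hf
  ae_hasDerivAt := by
    filter_upwards [hf.boundedVariationOn.ae_differentiableAt_of_mem_uIcc] with x hx hxab
    exact (hx hxab).hasDerivAt

lemma hasACDeriv_of_continuous (hf : ∀ x, HasDerivAt f (f' x) x) (hf' : Continuous f') :
    HasACDeriv f f' a b where
  absolutelyContinuousOnInterval := ContDiffOn.absolutelyContinuousOnInterval <| by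
    refine (contDiff_one_iff_deriv.2 ⟨fun x => (hf x).differentiableAt, ?_⟩).contDiffOn
    rwa [show deriv f = f' from funext fun x => (hf x).deriv]
  ae_hasDerivAt := .of_forall fun x _ => hf x

lemma HasACDeriv.comp_of_lipschitzWith {φ : E → F} {φ' : E → E →L[ℝ] F} {K : NNReal}
    (hφ : ∀ y, HasFDerivAt φ (φ' y) y) (hφK : LipschitzWith K φ) (hf : HasACDeriv f f' a b) :
    HasACDeriv (fun x => φ (f x)) (fun x => φ' (f x) (f' x)) a b where
  absolutelyContinuousOnInterval :=
    absolutelyContinuousOnInterval_comp_of_lipschitzWith hφK hf.absolutelyContinuousOnInterval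
  ae_hasDerivAt := by
    filter_upwards [hf.ae_hasDerivAt] with x hx hxab
    exact (hφ (f x)).comp_hasDerivAt x (hx hxab)

lemma HasACDeriv.mul {f f' g g' : ℝ → ℂ} (hf : HasACDeriv f f' a b) (hg : HasACDeriv g g' a b) :
    HasACDeriv (fun x => f x * g x) (fun x => f' x * g x + f x * g' x) a b where
  absolutelyContinuousOnInterval :=
    hf.absolutelyContinuousOnInterval.smul hg.absolutelyContinuousOnInterval
  ae_hasDerivAt := by
    filter_upwards [hf.ae_hasDerivAt, hg.ae_hasDerivAt] with x hfx hgx hxab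
    exact (hfx hxab).fun_mul (hgx hxab)

theorem HasACDeriv.integral_eq_sub [CompleteSpace E] (hf : HasACDeriv f f' a b)
    (hint : IntervalIntegrable f' volume a b) : ∫ x in a..b, f' x = f b - f a := by
  refine (SeparatingDual.eq_iff_forall_dual_eq (R := ℝ)).2 fun φ => ?_
  have hφf := hf.comp_of_lipschitzWith (fun _ => φ.hasFDerivAt) φ.lipschitz
  rw [← φ.intervalIntegral_comp_comm hint, map_sub,
    ← hφf.absolutelyContinuousOnInterval.integral_deriv_eq_sub]
  refine intervalIntegral.integral_congr_ae ?_
  filter_upwards [hφf.ae_hasDerivAt] with x hx hxab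
  exact (hx (Set.uIoc_subset_uIcc hxab)).deriv.symm

end AbsoluteContinuity

section FourierSeriesOfDerivative

variable {a b : ℝ} (hab : a < b)

lemma fourierCoeffOn_sub {f g : ℝ → ℂ} (hf : IntervalIntegrable f volume a b)
    (hg : IntervalIntegrable g volume a b) (n : ℤ) :
    fourierCoeffOn hab (fun x => f x - g x) n =
      fourierCoeffOn hab f n - fourierCoeffOn hab g n := by
  have hcont : Continuous fun x : ℝ => (fourier (-n) (x : AddCircle (b - a)) : ℂ) := by fun_prop
  simp only [fourierCoeffOn_eq_integral, smul_eq_mul, mul_sub]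
  rw [intervalIntegral.integral_sub (hf.continuousOn_mul hcont.continuousOn)
    (hg.continuousOn_mul hcont.continuousOn), smul_sub]

variable {f f' : ℝ → ℂ} (hf : HasACDeriv f f' a b) (hper : f a = f b)
include hf hper

theorem HasACDeriv.fourierCoeffOn_eq (hint : IntervalIntegrable f' volume a b) (n : ℤ) :
    fourierCoeffOn hab f' n = 2 * π * Complex.I * n / (b - a) * fourierCoeffOn hab f n := by
  have : Fact (0 < b - a) := ⟨sub_pos.2 hab⟩
  have hcont : Continuous fun x : ℝ => (fourier (-n) (x : AddCircle (b - a)) : ℂ) := by fun_prop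
  have hfourier := hasACDeriv_of_continuous (a := a) (b := b)
    (fun x => hasDerivAt_fourier_neg (b - a) n x) (by fun_prop)
  have hfint := hf.absolutelyContinuousOnInterval.continuousOn.intervalIntegrable
    (μ := volume)
  have hint₁ := hfint.continuousOn_mul (hcont.const_mul
    (-2 * π * Complex.I * n / ((b - a : ℝ) : ℂ))).continuousOn
  have hint₂ := hint.continuousOn_mul hcont.continuousOn
  have hend : fourier (-n) (b : AddCircle (b - a)) =
      (fourier (-n) (a : AddCircle (b - a)) : ℂ) := by
    rw [← AddCircle.coe_add_period (b - a) a, add_sub_cancel]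
  have hparts := (hfourier.mul hf).integral_eq_sub (hint₁.add hint₂)
  rw [hend, hper, sub_self, intervalIntegral.integral_add hint₁ hint₂] at hparts
  simp only [mul_assoc _ (fourier (-n) (_ : AddCircle (b - a)) : ℂ),
    intervalIntegral.integral_const_mul] at hparts
  rw [fourierCoeffOn_eq_integral, fourierCoeffOn_eq_integral]
  simp only [smul_eq_mul]
  rw [eq_neg_of_add_eq_zero_right hparts, Complex.real_smul, Complex.real_smul]
  push_cast
  ring

theorem HasACDeriv.hasSum_sq_abs_add_mul_norm_fourierCoeffOn
    (hL2 : MemLp f' 2 (volume.restrict (Set.Ioc a b))) (α : ℝ) :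
    HasSum (fun k : ℤ => (2 * π / (b - a)) ^ 2 *
        (|(k : ℝ) + α| ^ 2 * ‖fourierCoeffOn hab f k‖ ^ 2))
      ((b - a)⁻¹ * ∫ x in a..b, ‖Complex.I * f' x - (2 * π * α / (b - a) : ℝ) * f x‖ ^ 2) := by
  have hint : IntervalIntegrable f' volume a b :=
    (intervalIntegrable_iff_integrableOn_Ioc_of_le hab.le).2 (hL2.integrable one_le_two)
  have hfcont := hf.absolutelyContinuousOnInterval.continuousOn
  have hfL2 := memLp_restrict_Ioc_of_continuousOn hfcont 2
  refine (hasSum_sq_fourierCoeffOn hab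
    ((hL2.const_mul Complex.I).sub (hfL2.const_mul _))).congr_fun fun k => ?_
  have hcoeff : fourierCoeffOn hab
      (fun x => Complex.I * f' x - (2 * π * α / (b - a) : ℝ) * f x) k =
      (-(2 * π / (b - a) * (k + α)) : ℝ) * fourierCoeffOn hab f k := by
    rw [fourierCoeffOn_sub hab (hint.const_mul _) (hfcont.intervalIntegrable.const_mul _),
      fourierCoeffOn.const_mul, fourierCoeffOn.const_mul, hf.fourierCoeffOn_eq hab hper hint]
    push_cast
    linear_combination 2 * π * k / (b - a) * fourierCoeffOn hab f k * Complex.I_sq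
  refine .trans ?_ (congrArg (‖·‖ ^ 2) hcoeff).symm
  rw [norm_mul, Complex.norm_real, norm_neg, norm_eq_abs, mul_pow, sq_abs, sq_abs]
  ring

end FourierSeriesOfDerivative

section PeriodicFunctions

open AddCircle

variable {T : ℝ} [Fact (0 < T)]

lemma exists_continuousMap_addCircle {g : ℝ → ℂ} (hg : ContinuousOn g (Set.uIcc 0 T))
    (hper : g 0 = g T) : ∃ f : C(AddCircle T, ℂ), (∀ x ∈ Set.uIcc 0 T, f x = g x) ∧
      ∀ k, fourierCoeff f k = fourierCoeffOn (Fact.out : 0 < T) g k := by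
  have hT : 0 < T := Fact.out
  rw [Set.uIcc_of_le hT.le] at hg ⊢
  refine ⟨⟨liftIco T 0 g, liftIco_continuous (by rwa [zero_add]) (by rwa [zero_add])⟩,
    fun x hx => ?_, fun k => ?_⟩
  · rcases hx.2.eq_or_lt with rfl | hxT
    · have hzero := liftIco_zero_coe_apply (f := g) (Set.left_mem_Ico.2 hT)
      rwa [hper, coe_zero, ← coe_period] at hzero
    · exact liftIco_zero_coe_apply ⟨hx.1, hxT⟩
  · simpa only [zero_add] using! fourierCoeff_liftIco_eq (T := T) (a := 0) g k

lemma integral_haarAddCircle_of_eqOn {E : Type*} [NormedAddCommGroup E] [NormedSpace ℝ E]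
    {F : AddCircle T → E} {g : ℝ → E} (h : ∀ x ∈ Set.uIcc 0 T, F x = g x) :
    ∫ x, F x ∂haarAddCircle = T⁻¹ • ∫ x in (0 : ℝ)..T, g x := by
  have hpre := AddCircle.intervalIntegral_preimage T 0 F
  rw [zero_add, intervalIntegral.integral_congr h] at hpre
  rw [integral_haarAddCircle, hpre]

lemma orthonormal_toLp_iff {ι κ X : Type*} [DecidableEq ι] [Fintype κ] [TopologicalSpace X]
    [CompactSpace X] [MeasurableSpace X] [BorelSpace X] {μ : Measure X} [IsFiniteMeasure μ]
    {f : ι → κ → C(X, ℂ)} :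
    (Orthonormal ℂ fun n => WithLp.toLp 2 fun j => ContinuousMap.toLp 2 μ ℂ (f n j)) ↔
      ∀ n m, ∫ x, ∑ j, f n j x * conj (f m j x) ∂μ = if n = m then 1 else 0 := by
  have hinner : ∀ n m, ⟪WithLp.toLp 2 fun j => ContinuousMap.toLp 2 μ ℂ (f m j),
      WithLp.toLp 2 fun j => ContinuousMap.toLp 2 μ ℂ (f n j)⟫_ℂ =
      ∫ x, ∑ j, f n j x * conj (f m j x) ∂μ := by
    intro n m
    rw [integral_finsetSum _ fun j _ => Continuous.integrable_of_hasCompactSupport (by fun_prop)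
      (.of_compactSpace _)]
    simp only [PiLp.inner_apply, ContinuousMap.inner_toLp]
  rw [orthonormal_iff_ite, forall_comm]
  simp only [hinner, eq_comm]

theorem integral_re_trace_densityMatrix_pow_three_le_of_hasACDeriv {ι κ : Type*} [Fintype ι]
    [DecidableEq ι] [Fintype κ] [DecidableEq κ] {L : ℝ} (hL : 0 < L) {α : ℝ}
    (hα : ∀ m : ℤ, α ≠ m) {χ χ' : ι → κ → ℝ → ℂ}
    (hχ : ∀ n j, HasACDeriv (χ n j) (χ' n j) 0 L)
    (hχ' : ∀ n j, MemLp (χ' n j) 2 (volume.restrict (Set.Ioc 0 L)))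
    (hper : ∀ n j, χ n j 0 = χ n j L)
    (horth : ∀ n m, ∫ x in (0 : ℝ)..L, ∑ j, χ n j x * conj (χ m j x) =
      if n = m then (L : ℂ) else 0) :
    ∫ x in (0 : ℝ)..L, ((densityMatrix fun n => WithLp.toLp 2 fun j => χ n j x) ^ 3).trace.re ≤
      L ^ 2 * K2 α * ∑ n, ∑ j, ∫ x in (0 : ℝ)..L,
        ‖Complex.I * χ' n j x - (2 * π * α / L : ℝ) * χ n j x‖ ^ 2 := by
  have : Fact (0 < L) := ⟨hL⟩
  choose f hf hfcoeff using fun n j => exists_continuousMap_addCircle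
    (hχ n j).absolutelyContinuousOnInterval.continuousOn (hper n j)
  have hkin : ∀ n j, HasSum (fun k : ℤ => |(k : ℝ) + α| ^ 2 * ‖fourierCoeff (f n j) k‖ ^ 2)
      (((2 * π / L) ^ 2)⁻¹ * (L⁻¹ * ∫ x in (0 : ℝ)..L,
        ‖Complex.I * χ' n j x - (2 * π * α / L : ℝ) * χ n j x‖ ^ 2)) := by
    intro n j
    have hsum := ((hχ n j).hasSum_sq_abs_add_mul_norm_fourierCoeffOn hL (hper n j) (hχ' n j)
      α).mul_left ((2 * π / L) ^ 2)⁻¹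
    simp only [sub_zero] at hsum
    refine hsum.congr_fun fun k => ?_
    rw [hfcoeff, inv_mul_cancel_left₀ (by positivity)]
  have horth' : ∀ n m, ∫ x, ∑ j, f n j x * conj (f m j x) ∂haarAddCircle =
      if n = m then 1 else 0 := by
    intro n m
    rw [integral_haarAddCircle_of_eqOn (g := fun x => ∑ j, χ n j x * conj (χ m j x))
      fun x hx => by simp only [hf _ _ x hx], horth, smul_ite, smul_zero,
      Complex.real_smul, Complex.ofReal_inv, inv_mul_cancel₀ (Complex.ofReal_ne_zero.2 hL.ne')]
  have hfield : ∀ x ∈ Set.uIcc 0 L, ((densityMatrix (fieldAt f x) ^ 3).trace).re =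
      ((densityMatrix fun n => WithLp.toLp 2 fun j => χ n j x) ^ 3).trace.re :=
    fun x hx => by simp only [densityMatrix, fieldAt, hf _ _ x hx]
  have hcore := integral_re_trace_densityMatrix_pow_three_le_K2 hα
    (fun n j => (hkin n j).summable) (orthonormal_toLp_iff.2 horth')
  rw [integral_haarAddCircle_of_eqOn hfield, smul_eq_mul, inv_mul_le_iff₀ hL] at hcore
  simp only [(hkin _ _).tsum_eq, ← Finset.mul_sum] at hcore
  refine hcore.trans_eq ?_
  field_simp

end PeriodicFunctions

section Gauge

lemma exists_gauge {a : ℝ → ℝ} {L : ℝ} (ha : IntervalIntegrable a volume 0 L) {β : ℝ}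
    (hβ : β * L = ∫ x in (0 : ℝ)..L, a x) {r : ℝ} (hr : 0 ≤ r) :
    ∃ u : ℝ → ℂ, (∀ x, ‖u x‖ = r) ∧ u 0 = u L ∧
      HasACDeriv u (fun x => Complex.I * ((a x - β : ℝ) : ℂ) * u x) 0 L := by
  have hphase : HasACDeriv (fun x => (∫ t in (0 : ℝ)..x, a t) - β * x) (fun x => a x - β) 0 L := by
    constructor
    · exact (ha.absolutelyContinuousOnInterval_intervalIntegral Set.left_mem_uIcc).sub
        (contDiff_const.mul contDiff_id).contDiffOn.absolutelyContinuousOnInterval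
    · filter_upwards [ha.ae_hasDerivAt_integral] with x hx hxL
      have hlin := (hasDerivAt_id x).const_mul β
      rw [mul_one] at hlin
      exact (hx hxL 0 Set.left_mem_uIcc).fun_sub hlin
  have hexp : ∀ y : ℝ, HasDerivAt (fun y : ℝ => r * Complex.exp (Complex.I * y))
      (r * (Complex.exp (Complex.I * y) * Complex.I)) y := by
    intro y
    have hlin := (hasDerivAt_id (y : ℂ)).const_mul Complex.I
    rw [mul_one] at hlin
    exact (hlin.cexp.const_mul (r : ℂ)).comp_ofReal
  have hnorm : ∀ y : ℝ, ‖r * Complex.exp (Complex.I * y)‖ = r := fun y => by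
    rw [norm_mul, Complex.norm_exp_I_mul_ofReal, mul_one, Complex.norm_of_nonneg hr]
  have hlip : LipschitzWith ⟨r, hr⟩ fun y : ℝ => r * Complex.exp (Complex.I * y) := by
    refine lipschitzWith_of_nnnorm_deriv_le (fun y => (hexp y).differentiableAt) fun y => ?_
    rw [(hexp y).deriv, ← mul_assoc, nnnorm_mul, Complex.nnnorm_I, mul_one]
    exact (hnorm y).le
  refine ⟨fun x => r * Complex.exp (Complex.I * ((∫ t in (0 : ℝ)..x, a t) - β * x : ℝ)),
    fun x => hnorm _, ?_, ?_⟩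
  · simp only [intervalIntegral.integral_same, ← hβ, mul_zero, sub_self]
  · convert hphase.comp_of_lipschitzWith (fun y => (hexp y).hasFDerivAt) hlip using 2 with x
    simp only [ContinuousLinearMap.toSpanSingleton_apply, Complex.real_smul]
    ring

lemma sum_mul_mul_conj_mul {ι : Type*} [Fintype ι] (c : ℂ) (v w : ι → ℂ) :
    ∑ i, c * v i * conj (c * w i) = ((‖c‖ ^ 2 : ℝ) : ℂ) * ∑ i, v i * conj (w i) := by
  rw [Finset.mul_sum]
  refine Finset.sum_congr rfl fun i _ => ?_
  rw [map_mul, mul_mul_mul_comm, Complex.mul_conj, Complex.normSq_eq_norm_sq]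

lemma re_trace_densityMatrix_smul_pow {ι κ : Type*} [Fintype ι] [Fintype κ] [DecidableEq κ]
    (c : ℂ) (v : ι → EuclideanSpace ℂ κ) (k : ℕ) :
    ((densityMatrix fun n => c • v n) ^ k).trace.re =
      (‖c‖ ^ 2) ^ k * ((densityMatrix v) ^ k).trace.re := by
  have hsmul : densityMatrix (fun n => c • v n) = ((‖c‖ ^ 2 : ℝ) : ℂ) • densityMatrix v := by
    ext j l
    exact sum_mul_mul_conj_mul c (fun n => v n j) fun n => v n l
  rw [hsmul, smul_pow, Matrix.trace_smul, smul_eq_mul, ← Complex.ofReal_pow, Complex.re_ofReal_mul]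

lemma memLp_mul_of_continuousOn {f g : ℝ → ℂ} {x y : ℝ} {p : ENNReal}
    (hf : MemLp f p (volume.restrict (Set.Ioc x y))) (hg : ContinuousOn g (Set.uIcc x y)) :
    MemLp (fun t => f t * g t) p (volume.restrict (Set.Ioc x y)) :=
  (memLp_restrict_Ioc_of_continuousOn hg ⊤).mul' hf

lemma memLp_gauge_deriv {a : ℝ → ℝ} {L : ℝ} (ha : MemLp a 2 (volume.restrict (Set.Ioc 0 L)))
    {β : ℝ} {u f f' : ℝ → ℂ} (hu : ContinuousOn u (Set.uIcc 0 L))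
    (hf : ContinuousOn f (Set.uIcc 0 L)) (hf' : MemLp f' 2 (volume.restrict (Set.Ioc 0 L))) :
    MemLp (fun x => Complex.I * ((a x - β : ℝ) : ℂ) * u x * f x + u x * f' x) 2
      (volume.restrict (Set.Ioc 0 L)) := by
  have hshift : MemLp (fun x => Complex.I * ((a x - β : ℝ) : ℂ)) 2
      (volume.restrict (Set.Ioc 0 L)) := (ha.sub (memLp_const β)).ofReal.const_mul Complex.I
  refine (memLp_mul_of_continuousOn (memLp_mul_of_continuousOn hshift hu) hf).add ?_
  simpa only [mul_comm] using! memLp_mul_of_continuousOn hf' hu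

lemma norm_sq_gauge_covariant (a β : ℝ) (u z z' : ℂ) :
    ‖Complex.I * (Complex.I * ((a - β : ℝ) : ℂ) * u * z + u * z') - (β : ℂ) * (u * z)‖ ^ 2 =
      ‖u‖ ^ 2 * ‖Complex.I * z' - (a : ℂ) * z‖ ^ 2 := by
  rw [← mul_pow, ← norm_mul]
  congr 2
  push_cast
  linear_combination (a - β) * u * z * Complex.I_sq

lemma integral_sum_norm_sq_magnetic {κ : Type*} [Fintype κ] {a : ℝ → ℝ} {L : ℝ} (hL : 0 ≤ L)
    (ha : MemLp a 2 (volume.restrict (Set.Ioc 0 L))) {f f' : κ → ℝ → ℂ}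
    (hf : ∀ j, ContinuousOn (f j) (Set.uIcc 0 L))
    (hf' : ∀ j, MemLp (f' j) 2 (volume.restrict (Set.Ioc 0 L))) :
    ∫ x in (0 : ℝ)..L, ∑ j, ‖Complex.I * f' j x - (a x : ℂ) * f j x‖ ^ 2 =
      ∑ j, ∫ x in (0 : ℝ)..L, ‖Complex.I * f' j x - (a x : ℂ) * f j x‖ ^ 2 := by
  refine intervalIntegral.integral_finsetSum fun j _ => ?_
  rw [intervalIntegrable_iff_integrableOn_Ioc_of_le hL]
  exact (((hf' j).const_mul Complex.I).sub
    (memLp_mul_of_continuousOn ha.ofReal (hf j))).integrable_norm_pow two_ne_zero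

theorem matrix_lieb_thirring_orthonormal_K2_general {ι κ : Type*} [Fintype ι] [DecidableEq ι]
    [Fintype κ] [DecidableEq κ] {L : ℝ} (hL : 0 < L) {a : ℝ → ℝ}
    (ha : MemLp a 2 (volume.restrict (Set.Ioc 0 L))) {α : ℝ}
    (hα : α = 1 / (2 * π) * ∫ x in (0 : ℝ)..L, a x) (hαZ : ∀ m : ℤ, α ≠ m)
    {ψ : ι → ℝ → κ → ℂ} (hψ : ∀ n j, AbsolutelyContinuousOnInterval (fun x => ψ n x j) 0 L)
    (hψ' : ∀ n j, MemLp (deriv fun x => ψ n x j) 2 (volume.restrict (Set.Ioc 0 L)))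
    (hψL : ∀ n, ψ n 0 = ψ n L)
    (horth : ∀ n m, ∫ x in (0 : ℝ)..L, ∑ j, ψ n x j * conj (ψ m x j) = if n = m then 1 else 0) :
    ∫ x in (0 : ℝ)..L,
        (Matrix.trace ((Matrix.of fun j l => ∑ n, ψ n x j * conj (ψ n x l)) ^ 3)).re ≤
      K2 α * ∑ n, ∫ x in (0 : ℝ)..L,
        ∑ j, ‖Complex.I * deriv (fun y => ψ n y j) x - (a x : ℂ) * ψ n x j‖ ^ 2 := by
  have ha_int : IntervalIntegrable a volume 0 L :=
    (intervalIntegrable_iff_integrableOn_Ioc_of_le hL.le).2 (ha.integrable one_le_two)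
  have hβ : 2 * π * α / L * L = ∫ x in (0 : ℝ)..L, a x := by
    rw [hα]
    field_simp
  obtain ⟨u, hu_norm, hu_per, hu⟩ := exists_gauge ha_int hβ (sqrt_nonneg L)
  have hu_sq : ∀ x, ‖u x‖ ^ 2 = L := fun x => by rw [hu_norm, sq_sqrt hL.le]
  have hu_cont := hu.absolutelyContinuousOnInterval.continuousOn
  have hψ_cont := fun n j => (hψ n j).continuousOn
  have hgauged := integral_re_trace_densityMatrix_pow_three_le_of_hasACDeriv hL hαZ
    (fun n j => hu.mul (hasACDeriv_deriv (hψ n j)))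
    (fun n j => memLp_gauge_deriv ha hu_cont (hψ_cont n j) (hψ' n j))
    (fun n j => by rw [hu_per, hψL n])
    fun n m => by simp only [sum_mul_mul_conj_mul, hu_sq, intervalIntegral.integral_const_mul,
      horth, mul_ite, mul_one, mul_zero]
  have hdensity : ∀ x,
      ((densityMatrix fun n => WithLp.toLp 2 fun j => u x * ψ n x j) ^ 3).trace.re =
        L ^ 3 * (Matrix.trace ((Matrix.of fun j l => ∑ n, ψ n x j * conj (ψ n x l)) ^ 3)).re :=
    fun x => by
      rw [← hu_sq x]
      exact re_trace_densityMatrix_smul_pow (u x) (fun n => WithLp.toLp 2 (ψ n x)) 3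
  simp only [hdensity, norm_sq_gauge_covariant, hu_sq, intervalIntegral.integral_const_mul,
    ← Finset.mul_sum] at hgauged
  simp only [integral_sum_norm_sq_magnetic hL.le ha (hψ_cont _) (hψ' _)]
  refine le_of_mul_le_mul_left (hgauged.trans_eq ?_) (pow_pos hL 3)
  ring

end Gauge

/-- matrix Lieb–Thirring inequality for orthonormal systems, constant `K₂(α)`. -/
theorem matrix_lieb_thirring_orthonormal_K2
    (L : ℝ) (hL : 0 < L) (M : ℕ) (hM : 1 ≤ M)
    (a : ℝ → ℝ) (ha : Continuous a) (haP : Function.Periodic a L)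
    (α : ℝ) (hα : α = (1 / (2 * Real.pi)) * ∫ x in (0:ℝ)..L, a x)
    (hαZ : ∀ m : ℤ, α ≠ (m : ℝ))
    (N : ℕ) (ψ : Fin N → ℝ → (Fin M → ℂ))
    (hψ : ∀ n j, ContDiff ℝ 1 (fun x => ψ n x j))
    (hψP : ∀ n, Function.Periodic (ψ n) L)
    (horth : ∀ n m, ∫ x in (0:ℝ)..L, ∑ j, ψ n x j * (starRingEnd ℂ) (ψ m x j) =
      if n = m then 1 else 0) :
    ∫ x in (0:ℝ)..L,
        (Matrix.trace
          ((Matrix.of fun j l => ∑ n, ψ n x j * (starRingEnd ℂ) (ψ n x l)) ^ 3)).re ≤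
      K2 α * ∑ n, ∫ x in (0:ℝ)..L,
        ∑ j, ‖Complex.I * deriv (fun y => ψ n y j) x - (a x : ℂ) * ψ n x j‖ ^ 2 :=
  matrix_lieb_thirring_orthonormal_K2_general hL
    (memLp_restrict_Ioc_of_continuousOn ha.continuousOn 2) hα hαZ
    (fun n j => (hψ n j).contDiffOn.absolutelyContinuousOnInterval)
    (fun n j => memLp_restrict_Ioc_of_continuousOn (hψ n j).continuous_deriv_one.continuousOn 2)
    (fun n => (hψP n).eq.symm) horth
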